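/- arXiv:1709.01296 — 3 statements merged into one kernel-verified Lean document; each statement's English description precedes it below -/
import Mathlib

section
/- The extreme points of J are exactly the n! points v_σ indexed by permutations σ of {1, …, n}, where v_σ is defined by (v_σ)_{σ(k)} = c_k − c_{k−1} for k = 1, …, n. In particular J has exactly one vertex for each ordering of the petals of the rose (this is the rose case of Proposition 2.1 and Corollary 2.2 of the paper: the jewel of a marked rose is a permutohedron whose vertices are the orderings of its petals). -/
/-!
Write `S(A) = ∑_{i ∈ A} x i`. The condition `2 c_k < c_{k+1}` makes `c` nonnegative and increasing,
with increasing differences `c_{k+1} - c_k`. Consequently the jewel is cut out of the hyperplane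
`∑ x i = 1` by the inequalities `c |A| ≤ S(A)` for *all* subsets `A` (`mem_roseJewel_iff`). Call `A`
tight at `x` if equality holds.

A point with all prefixes of an ordering `σ` tight is `v_σ` (`eq_roseVertex`). The point `v_σ` lies
in the jewel since a sum of `m` distinct differences is at least the sum of the `m` smallest ones,
and it is extreme because tightness of a set at a point of an open segment in the jewel passes to
the endpoints of the segment.

Conversely, let `x` be an extreme point. Two incomparable tight sets `A`, `B` with `|A| ≤ |B|` would
give `c |A ∪ B| ≤ S(A) + S(B) ≤ 2 c |B| < c |A ∪ B|`, so the tight sets form a chain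
(`tight_chain`). Any two petals `i ≠ j` are separated by a tight set: otherwise
`x ± ε (e_i - e_j)` stays in the jewel for small `ε` (`exists_tight_separating`). Hence the sizes of
the smallest tight sets containing the various petals are distinct and order the petals; the
prefixes of this ordering are tight, so `x` is the corresponding vertex.
-/

/-- The jewel of an `n`-petaled rose: the standard simplex in `ℝ^n` truncated by
`∑_{i ∈ A} x i ≥ c |A|` for every nonempty proper subset `A` of the petals. -/
def roseJewel (n : ℕ) (c : ℕ → ℝ) : Set (Fin n → ℝ) :=
  {x | (∀ i, 0 ≤ x i) ∧ (∑ i, x i = 1) ∧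
    ∀ A : Finset (Fin n), A.Nonempty → A ≠ Finset.univ → c A.card ≤ ∑ i ∈ A, x i}

/-- The candidate vertex associated to an ordering `σ` of the petals:
`(v_σ)_{σ(k)} = c (k+1) - c k` (paper's `c_k - c_{k-1}` for `k = 1, …, n`). -/
noncomputable def roseVertex (n : ℕ) (c : ℕ → ℝ) (σ : Equiv.Perm (Fin n)) :
    Fin n → ℝ :=
  fun i => c ((σ.symm i : ℕ) + 1) - c (σ.symm i : ℕ)

namespace RoseJewel

variable {n : ℕ} {c : ℕ → ℝ}

lemma c_nonneg (hc0 : c 0 = 0) (hc : ∀ k, k < n → 2 * c k < c (k + 1)) :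
    ∀ k, k ≤ n → 0 ≤ c k := by
  intro k
  induction k with
  | zero => intro _; exact hc0.ge
  | succ k ih =>
    intro hk
    have h1 := ih (by omega)
    have h2 := hc k (by omega)
    linarith

lemma c_mono (hc0 : c 0 = 0) (hc : ∀ k, k < n → 2 * c k < c (k + 1)) {a b : ℕ}
    (hab : a ≤ b) (hb : b ≤ n) : c a ≤ c b := by
  induction b, hab using Nat.le_induction with
  | base => exact le_rfl
  | succ b _ ih =>
    have h1 := ih (by omega)
    have h2 := hc b (by omega)
    have h3 := c_nonneg hc0 hc b (by omega)
    linarith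

lemma diff_lt (hc0 : c 0 = 0) (hc : ∀ k, k < n → 2 * c k < c (k + 1)) {a b : ℕ}
    (hab : a < b) (hb : b < n) : c (a + 1) - c a < c (b + 1) - c b := by
  have h1 := c_mono hc0 hc (show a + 1 ≤ b by omega) hb.le
  have h2 := c_nonneg hc0 hc a (by omega)
  have h3 := hc b hb
  linarith

/-- A sum of distinct differences is at least the sum of as many of the smallest ones, and the
latter telescopes. -/
lemma le_sum_diff (hc0 : c 0 = 0) (hc : ∀ k, k < n → 2 * c k < c (k + 1)) (B : Finset ℕ) :
    (∀ b ∈ B, b < n) → c B.card ≤ ∑ k ∈ B, (c (k + 1) - c k) := by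
  induction B using Finset.induction_on_max with
  | empty => intro _; simp [hc0]
  | insert a s hs ih =>
    intro hB
    have ha : a ∉ s := fun h => lt_irrefl _ (hs a h)
    have h1 := ih fun b hb => hB b (Finset.mem_insert_of_mem hb)
    have han := hB a (Finset.mem_insert_self _ _)
    have hcard : s.card ≤ a := by
      have : s ⊆ Finset.range a := fun b hb => Finset.mem_range.2 (hs b hb)
      simpa using Finset.card_le_card this
    rw [Finset.card_insert_of_notMem ha, Finset.sum_insert ha]
    rcases hcard.eq_or_lt with h | h
    · rw [h] at h1 ⊢
      linarith
    · have := diff_lt hc0 hc h han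
      linarith

lemma mem_roseJewel_iff (hn : 1 ≤ n) (hc0 : c 0 = 0) (hcn : c n = 1)
    (hc : ∀ k, k < n → 2 * c k < c (k + 1)) {x : Fin n → ℝ} :
    x ∈ roseJewel n c ↔
      ∑ i, x i = 1 ∧ ∀ A : Finset (Fin n), c A.card ≤ ∑ i ∈ A, x i := by
  constructor
  · rintro ⟨_, h1, h2⟩
    refine ⟨h1, fun A => ?_⟩
    rcases A.eq_empty_or_nonempty with rfl | hA
    · simp [hc0]
    · by_cases hA' : A = Finset.univ
      · subst hA'
        simp [h1, hcn]
      · exact h2 A hA hA'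
  · rintro ⟨h1, h2⟩
    refine ⟨fun i => ?_, h1, fun A _ _ => h2 A⟩
    have h3 := h2 {i}
    have h4 := c_nonneg hc0 hc 1 hn
    simp only [Finset.card_singleton, Finset.sum_singleton] at h3
    linarith

/-- The set of the first `k` petals in the ordering `σ`. -/
def firstPetals (σ : Equiv.Perm (Fin n)) (k : ℕ) : Finset (Fin n) :=
  Finset.univ.filter fun j => (σ.symm j : ℕ) < k

lemma firstPetals_succ (σ : Equiv.Perm (Fin n)) (i : Fin n) :
    i ∉ firstPetals σ (σ.symm i) ∧
      firstPetals σ ((σ.symm i : ℕ) + 1) = insert i (firstPetals σ (σ.symm i)) := by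
  refine ⟨by simp [firstPetals], ?_⟩
  ext j
  simp only [firstPetals, Finset.mem_filter, Finset.mem_univ, true_and, Finset.mem_insert]
  have : j = i ↔ (σ.symm j : ℕ) = σ.symm i := by
    rw [Fin.val_inj, σ.symm.injective.eq_iff]
  rw [this]
  omega

/-- Tightness of all prefixes of `σ` pins down every coordinate. -/
lemma eq_roseVertex (σ : Equiv.Perm (Fin n)) {x : Fin n → ℝ}
    (h : ∀ k, k ≤ n → ∑ i ∈ firstPetals σ k, x i = c k) : x = roseVertex n c σ := by
  funext i
  obtain ⟨h1, h2⟩ := firstPetals_succ σ i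
  have h3 := h _ (σ.symm i).isLt.le
  have h4 := h _ (σ.symm i).isLt
  rw [Nat.succ_eq_add_one, h2, Finset.sum_insert h1, h3] at h4
  simp only [roseVertex]
  linarith

/-- The sum of `v_σ` over `A`, written over the positions in `σ` of the petals in `A`. -/
lemma sum_roseVertex (σ : Equiv.Perm (Fin n)) (A : Finset (Fin n)) :
    ∑ i ∈ A, roseVertex n c σ i =
      ∑ k ∈ A.map (σ.symm.toEmbedding.trans Fin.valEmbedding), (c (k + 1) - c k) := by
  simp [Finset.sum_map, roseVertex]

lemma map_firstPetals (σ : Equiv.Perm (Fin n)) {k : ℕ} (hk : k ≤ n) :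
    (firstPetals σ k).map (σ.symm.toEmbedding.trans Fin.valEmbedding) = Finset.range k := by
  ext m
  simp only [firstPetals, Finset.mem_map, Finset.mem_filter, Finset.mem_univ, true_and,
    Finset.mem_range, Function.Embedding.trans_apply, Equiv.coe_toEmbedding,
    Fin.valEmbedding_apply]
  constructor
  · rintro ⟨j, hj, rfl⟩
    exact hj
  · intro hm
    exact ⟨σ ⟨m, by omega⟩, by simpa using hm, by simp⟩

lemma sum_firstPetals_roseVertex (hc0 : c 0 = 0) (σ : Equiv.Perm (Fin n)) {k : ℕ} (hk : k ≤ n) :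
    ∑ i ∈ firstPetals σ k, roseVertex n c σ i = c k := by
  rw [sum_roseVertex, map_firstPetals σ hk, Finset.sum_range_sub, hc0, sub_zero]

lemma roseVertex_mem (hn : 1 ≤ n) (hc0 : c 0 = 0) (hcn : c n = 1)
    (hc : ∀ k, k < n → 2 * c k < c (k + 1)) (σ : Equiv.Perm (Fin n)) :
    roseVertex n c σ ∈ roseJewel n c := by
  rw [mem_roseJewel_iff hn hc0 hcn hc]
  constructor
  · have h := sum_firstPetals_roseVertex hc0 σ le_rfl
    rw [hcn] at h
    simpa [firstPetals] using h
  · intro A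
    rw [sum_roseVertex]
    have h := le_sum_diff hc0 hc (A.map (σ.symm.toEmbedding.trans Fin.valEmbedding)) (by
      intro b hb
      obtain ⟨j, _, rfl⟩ := Finset.mem_map.1 hb
      exact (σ.symm j).isLt)
    rwa [Finset.card_map] at h

lemma roseVertex_extreme (hn : 1 ≤ n) (hc0 : c 0 = 0) (hcn : c n = 1)
    (hc : ∀ k, k < n → 2 * c k < c (k + 1)) (σ : Equiv.Perm (Fin n)) :
    roseVertex n c σ ∈ Set.extremePoints ℝ (roseJewel n c) := by
  refine mem_extremePoints_iff_left.2 ⟨roseVertex_mem hn hc0 hcn hc σ, ?_⟩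
  rintro x hx y hy ⟨a, b, ha, hb, hab, hv⟩
  apply eq_roseVertex
  intro k hk
  have hcard : (firstPetals σ k).card = k := by
    rw [← Finset.card_map, map_firstPetals σ hk, Finset.card_range]
  have h1 := ((mem_roseJewel_iff hn hc0 hcn hc).1 hx).2 (firstPetals σ k)
  have h2 := ((mem_roseJewel_iff hn hc0 hcn hc).1 hy).2 (firstPetals σ k)
  have h3 := sum_firstPetals_roseVertex hc0 σ hk
  rw [hcard] at h1 h2
  rw [← hv] at h3
  simp only [Pi.add_apply, Pi.smul_apply, smul_eq_mul, Finset.sum_add_distrib,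
    ← Finset.mul_sum] at h3
  have hb' : b = 1 - a := by linarith
  subst hb'
  refine le_antisymm ?_ h1
  have h4 := mul_le_mul_of_nonneg_left h2 hb.le
  exact le_of_mul_le_mul_left (by linarith) ha

/-- `A` is tight at `x`: the inequality of the jewel attached to `A` is an equality at `x`. -/
def Tight (c : ℕ → ℝ) (x : Fin n → ℝ) (A : Finset (Fin n)) : Prop :=
  ∑ i ∈ A, x i = c A.card

lemma tight_chain (hn : 1 ≤ n) (hc0 : c 0 = 0) (hcn : c n = 1)
    (hc : ∀ k, k < n → 2 * c k < c (k + 1)) {x : Fin n → ℝ} (hx : x ∈ roseJewel n c)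
    {A B : Finset (Fin n)} (hA : Tight c x A) (hB : Tight c x B) (hAB : A.card ≤ B.card) :
    A ⊆ B := by
  by_contra hsub
  have hlt : B.card < (A ∪ B).card := by
    apply Finset.card_lt_card
    refine Finset.ssubset_iff_subset_ne.2 ⟨Finset.subset_union_right, fun h => hsub ?_⟩
    rw [h]
    exact Finset.subset_union_left
  have hle : (A ∪ B).card ≤ n := by simpa using Finset.card_le_univ (A ∪ B)
  have h1 := ((mem_roseJewel_iff hn hc0 hcn hc).1 hx).2 (A ∪ B)
  have h2 : 0 ≤ ∑ i ∈ A ∩ B, x i := Finset.sum_nonneg fun i _ => hx.1 i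
  have h3 := Finset.sum_union_inter (s₁ := A) (s₂ := B) (f := x)
  have h4 := c_mono hc0 hc hAB (by omega)
  have h5 := hc B.card (by omega)
  have h6 := c_mono hc0 hc (show B.card + 1 ≤ _ from hlt) hle
  unfold Tight at hA hB
  linarith

/-- At an extreme point, two distinct petals are separated by a tight set; otherwise mass could be
moved between them in both directions. -/
lemma exists_tight_separating (hn : 1 ≤ n) (hc0 : c 0 = 0) (hcn : c n = 1)
    (hc : ∀ k, k < n → 2 * c k < c (k + 1)) {x : Fin n → ℝ}
    (hx : x ∈ Set.extremePoints ℝ (roseJewel n c)) {i j : Fin n} (hij : i ≠ j) :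
    ∃ A, Tight c x A ∧ ¬(i ∈ A ↔ j ∈ A) := by
  classical
  by_contra! hcon
  obtain ⟨hx1, hx2⟩ := (mem_roseJewel_iff hn hc0 hcn hc).1 hx.1
  -- `ε` is the smallest slack of the inequalities that are not tight, capped at `1`.
  obtain ⟨ε, hε, hslack⟩ : ∃ ε : ℝ, 0 < ε ∧
      ∀ A : Finset (Fin n), ¬ Tight c x A → c A.card + ε ≤ ∑ i ∈ A, x i := by
    let g : Finset (Fin n) → ℝ := fun A => if Tight c x A then 1 else ∑ i ∈ A, x i - c A.card
    obtain ⟨A₀, hA₀⟩ := Finite.exists_min g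
    refine ⟨g A₀, ?_, fun A hA => ?_⟩
    · simp only [g]
      split_ifs with h
      · exact one_pos
      · exact sub_pos.2 (lt_of_le_of_ne (hx2 A₀) (Ne.symm h))
    · have := hA₀ A
      simp only [g, if_neg hA] at this ⊢
      linarith
  have hsum : ∀ (t : ℝ) (A : Finset (Fin n)),
      ∑ k ∈ A, (x + t • (Pi.single i 1 - Pi.single j 1 : Fin n → ℝ)) k =
        ∑ k ∈ A, x k + t * ((if i ∈ A then 1 else 0) - (if j ∈ A then 1 else 0)) := by
    intro t A
    simp [Finset.sum_add_distrib, ← Finset.mul_sum, Pi.single_apply]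
  have hmem : ∀ t : ℝ, |t| ≤ ε →
      x + t • (Pi.single i 1 - Pi.single j 1 : Fin n → ℝ) ∈ roseJewel n c := by
    intro t ht
    obtain ⟨ht1, ht2⟩ := abs_le.1 ht
    rw [mem_roseJewel_iff hn hc0 hcn hc]
    refine ⟨by rw [hsum]; simpa using hx1, fun A => ?_⟩
    rw [hsum]
    by_cases hA : Tight c x A
    · have h := hx2 A
      simp only [hcon A hA, sub_self, mul_zero, add_zero]
      exact h
    · have h := hslack A hA
      split_ifs <;> linarith
  have hmid : x ∈ openSegment ℝ (x + ε • (Pi.single i 1 - Pi.single j 1 : Fin n → ℝ))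
      (x + (-ε) • (Pi.single i 1 - Pi.single j 1 : Fin n → ℝ)) := by
    refine ⟨1 / 2, 1 / 2, by norm_num, by norm_num, by norm_num, ?_⟩
    module
  have heq := (mem_extremePoints_iff_left.1 hx).2 _ (hmem ε (abs_of_pos hε).le) _
    (hmem (-ε) (by rw [abs_neg, abs_of_pos hε])) hmid
  have := congrFun heq i
  simp [hij, hε.ne'] at this

lemma extreme_mem_range (hn : 1 ≤ n) (hc0 : c 0 = 0) (hcn : c n = 1)
    (hc : ∀ k, k < n → 2 * c k < c (k + 1)) {x : Fin n → ℝ}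
    (hx : x ∈ Set.extremePoints ℝ (roseJewel n c)) : x ∈ Set.range (roseVertex n c) := by
  classical
  have hx1 := ((mem_roseJewel_iff hn hc0 hcn hc).1 hx.1).1
  have huniv : Tight c x Finset.univ := by simp [Tight, hx1, hcn]
  have hchain := @tight_chain n c hn hc0 hcn hc x hx.1
  -- `M i` is the smallest tight set containing `i`; one exists because the whole set is tight.
  have hM : ∀ i : Fin n, ∃ A : Finset (Fin n), (Tight c x A ∧ i ∈ A) ∧
      ∀ B, Tight c x B → i ∈ B → A.card ≤ B.card := by
    intro i
    obtain ⟨A, hA, hmin⟩ := Finset.exists_min_image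
      (Finset.univ.filter fun A : Finset (Fin n) => Tight c x A ∧ i ∈ A) Finset.card
      ⟨Finset.univ, by simp [huniv]⟩
    exact ⟨A, by simpa using hA, fun B hB hiB => hmin B (by simp [hB, hiB])⟩
  choose M hM hmin using hM
  have hpos : ∀ i, 0 < (M i).card := fun i => Finset.card_pos.2 ⟨i, (hM i).2⟩
  have hle : ∀ i, (M i).card ≤ n := fun i => by simpa using Finset.card_le_univ (M i)
  have hmemM : ∀ i j, j ∈ M i ↔ (M j).card ≤ (M i).card := fun i j =>
    ⟨fun h => hmin j _ (hM i).1 h, fun h => hchain (hM j).1 (hM i).1 h (hM j).2⟩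
  have hinj : ∀ i j, (M i).card = (M j).card → i = j := by
    intro i j h
    by_contra hij
    obtain ⟨A, hA, hsep⟩ := exists_tight_separating hn hc0 hcn hc hx hij
    refine hsep ⟨fun hi => ?_, fun hj => ?_⟩
    · exact hchain (hM i).1 hA (hmin i A hA hi) ((hmemM i j).2 h.ge)
    · exact hchain (hM j).1 hA (hmin j A hA hj) ((hmemM j i).2 h.le)
  let f : Fin n → Fin n := fun i => ⟨(M i).card - 1, by have := hpos i; have := hle i; omega⟩
  have hf : Function.Injective f := by
    intro i j h
    have h' : (M i).card - 1 = (M j).card - 1 := congrArg Fin.val h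
    have := hpos i
    have := hpos j
    exact hinj i j (by omega)
  let τ : Equiv.Perm (Fin n) := Equiv.ofBijective f (Finite.injective_iff_bijective.1 hf)
  have hτ : ∀ i, (τ i : ℕ) = (M i).card - 1 := fun i => rfl
  refine ⟨τ.symm, (eq_roseVertex τ.symm fun k hk => ?_).symm⟩
  cases k with
  | zero => simp [firstPetals, hc0]
  | succ k =>
    -- The first `k + 1` petals form `M i`, where `i` is the petal in position `k`.
    obtain ⟨i, hi⟩ := τ.surjective ⟨k, hk⟩
    have hik : (M i).card - 1 = k := by rw [← hτ, hi]
    have hset : firstPetals τ.symm (k + 1) = M i := by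
      ext j
      have h1 := hpos i
      have h2 := hpos j
      simp only [firstPetals, Finset.mem_filter, Finset.mem_univ, true_and, Equiv.symm_symm,
        hmemM, hτ]
      omega
    have h := (hM i).1
    have hcard : (M i).card = k + 1 := by have := hpos i; omega
    rw [Tight, hcard] at h
    rw [hset, h]

lemma roseVertex_injective (hc0 : c 0 = 0) (hc : ∀ k, k < n → 2 * c k < c (k + 1)) :
    Function.Injective (roseVertex n c) := by
  intro σ τ h
  have hsymm : σ.symm = τ.symm := by
    ext i
    have hi := congrFun h i
    simp only [roseVertex] at hi
    rcases lt_trichotomy (σ.symm i : ℕ) (τ.symm i) with hlt | heq | hlt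
    · exact absurd hi (diff_lt hc0 hc hlt (τ.symm i).isLt).ne
    · exact heq
    · exact absurd hi (diff_lt hc0 hc hlt (σ.symm i).isLt).ne'
  simpa using congrArg Equiv.symm hsymm

end RoseJewel

/-- The extreme points of the jewel of a rose are exactly the `n!` points `v_σ`
indexed by the orderings of the petals. -/
theorem extremePoints_roseJewel (n : ℕ) (hn : 1 ≤ n) (c : ℕ → ℝ)
    (hc0 : c 0 = 0) (hcn : c n = 1) (hc : ∀ k, k < n → 2 * c k < c (k + 1)) :
    Set.extremePoints ℝ (roseJewel n c) = Set.range (roseVertex n c) ∧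
      Function.Injective (roseVertex n c) := by
  refine ⟨Set.Subset.antisymm ?_ ?_, RoseJewel.roseVertex_injective hc0 hc⟩
  · exact fun x hx => RoseJewel.extreme_mem_range hn hc0 hcn hc hx
  · rintro _ ⟨σ, rfl⟩
    exact RoseJewel.roseVertex_extreme hn hc0 hcn hc σ
end

section
/- Let y : Δ → ℝ satisfy y_i ≥ 0 for all i ∈ Δ and ∑_{i ∈ D} y_i ≥ c_D for every D ∈ 𝒞. If A, B ∈ 𝒞 satisfy ∑_{i ∈ A} y_i = c_A and ∑_{i ∈ B} y_i = c_B, then A ⊆ B or B ⊆ A. (Thus the set of truncation constraints that are tight at any point of the jewel is nested, i.e. forms a flag; this is the key step in the proof of Proposition 2.1 of the paper.) -/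
/-- If the truncation constants satisfy `c A + c B < c (A ∪ B)` whenever `A` and `B`
are both proper subsets of `A ∪ B`, then the constraints that are tight at a point of
the jewel are nested: if `∑_{i ∈ A} y i = c A` and `∑_{i ∈ B} y i = c B` then
`A ⊆ B` or `B ⊆ A`. -/
theorem tight_constraints_nested (m : ℕ) (hm : 1 ≤ m)
    (C : Set (Finset (Fin (m + 1))))
    (hC : ∀ A ∈ C, ∀ B ∈ C, A ∪ B ∈ C)
    (c : Finset (Fin (m + 1)) → ℝ)
    (hc : ∀ A ∈ C, ∀ B ∈ C, A ⊂ A ∪ B → B ⊂ A ∪ B → c A + c B < c (A ∪ B))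
    (y : Fin (m + 1) → ℝ) (hy : ∀ i, 0 ≤ y i)
    (hyC : ∀ D ∈ C, c D ≤ ∑ i ∈ D, y i)
    (A : Finset (Fin (m + 1))) (hA : A ∈ C)
    (B : Finset (Fin (m + 1))) (hB : B ∈ C)
    (hAeq : ∑ i ∈ A, y i = c A) (hBeq : ∑ i ∈ B, y i = c B) :
    A ⊆ B ∨ B ⊆ A := by
  by_contra! h
  obtain ⟨hAB, hBA⟩ := h
  have hA' : A ⊂ A ∪ B :=
    ⟨Finset.subset_union_left, fun h => hBA (Finset.subset_union_right.trans h)⟩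
  have hB' : B ⊂ A ∪ B :=
    ⟨Finset.subset_union_right, fun h => hAB (Finset.subset_union_left.trans h)⟩
  -- If neither set contains the other, nonnegativity of `y` on `A ∩ B` gives
  -- `c (A ∪ B) ≤ ∑ (A ∪ B) ≤ ∑ A + ∑ B = c A + c B`, against strict superadditivity.
  have hlt := hc A hA B hB hA' hB'
  have hle := hyC _ (hC A hA B hB)
  have hsum := Finset.sum_union_inter (s₁ := A) (s₂ := B) (f := y)
  have hinter : 0 ≤ ∑ i ∈ A ∩ B, y i := Finset.sum_nonneg fun i _ => hy i
  linarith
end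

section
/- If y is an extreme point of the jewel J with y_i > 0 for every i ∈ Δ, then there is a strictly increasing chain A_1 ⊊ A_2 ⊊ ⋯ ⊊ A_m of elements of 𝒞 such that A_j has exactly j elements and ∑_{i ∈ A_j} y_i = c_{A_j} for every j = 1, …, m. (This is the content of the proof of Proposition 2.1 of the paper: a vertex of the jewel lying in the interior of the simplex meets at least m bounding hyperplanes, and the corresponding tight sets form a complete flag of subsets of Δ.) -/
/-!
Call `D ∈ C` *tight* at `y` if `∑ i ∈ D, y i = c D`.

* Tight sets form a chain (`tight_chain`): for incomparable tight `A`, `B`, the hypotheses on `c`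
  give `∑_A y + ∑_B y < ∑_{A ∪ B} y`, whereas `y ≥ 0` gives `∑_{A ∪ B} y ≤ ∑_A y + ∑_B y`.
* Tight sets separate the points of `Δ` (`tight_separates`): if every tight set contains both or
  neither of `p ≠ q`, then `y ± ε (e_p - e_q)` lies in the jewel for small `ε`, so `y` is not
  extreme (`extreme_direction_eq_zero`).

A chain of sets separating the `m + 1` points of `Δ` has at least `m` members, because the number
of members containing a point determines the point. The members have distinct cardinalities
in `{1, …, m}`, so each of these cardinalities occurs.
-/

/-- The jewel `J(G)`: the standard simplex on `Δ = {0, …, m}` truncated by the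
constraints `∑_{i ∈ D} x i ≥ c D` for `D` in the collection `𝒞` of core subsets. -/
def jewel (m : ℕ) (C : Set (Finset (Fin (m + 1))))
    (c : Finset (Fin (m + 1)) → ℝ) : Set (Fin (m + 1) → ℝ) :=
  {x | (∀ i, 0 ≤ x i) ∧ (∑ i, x i = 1) ∧ ∀ D ∈ C, c D ≤ ∑ i ∈ D, x i}

/-- At an extreme point with positive coordinates, the only direction preserving the total sum and
all tight constraints is zero: the remaining constraints are strict, hence survive a small
perturbation in both senses. -/
lemma extreme_direction_eq_zero {m : ℕ} {C : Set (Finset (Fin (m + 1)))}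
    {c : Finset (Fin (m + 1)) → ℝ} {y : Fin (m + 1) → ℝ}
    (hy : y ∈ Set.extremePoints ℝ (jewel m C c)) (hypos : ∀ i, 0 < y i)
    (v : Fin (m + 1) → ℝ) (hv : ∑ i, v i = 0)
    (hvt : ∀ D ∈ C, ∑ i ∈ D, y i = c D → ∑ i ∈ D, v i = 0) : v = 0 := by
  obtain ⟨⟨-, hy1, hyC⟩, hext⟩ := hy
  have key : ∀ᶠ ε : ℝ in nhds 0, y + ε • v ∈ jewel m C c := by
    have h1 : ∀ᶠ ε : ℝ in nhds 0, ∀ i, 0 < y i + ε * v i := by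
      rw [Filter.eventually_all]
      intro i
      have hcont : Continuous fun ε : ℝ => y i + ε * v i := by fun_prop
      exact hcont.continuousAt.eventually (lt_mem_nhds (by simpa using hypos i))
    have h2 : ∀ᶠ ε : ℝ in nhds 0, ∀ D : Finset (Fin (m + 1)), D ∈ C →
        c D ≤ ∑ i ∈ D, y i + ε * ∑ i ∈ D, v i := by
      rw [Filter.eventually_all]
      intro D
      by_cases hD : D ∈ C
      · rcases (hyC D hD).eq_or_lt with h | h
        · simp [hvt D hD h.symm, h]
        · have hcont : Continuous fun ε : ℝ => ∑ i ∈ D, y i + ε * ∑ i ∈ D, v i := by fun_prop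
          filter_upwards [hcont.continuousAt.eventually
            (lt_mem_nhds (a := c D) (by simpa using h))] with ε hε _ using hε.le
      · simp [hD]
    filter_upwards [h1, h2] with ε h1 h2
    refine ⟨fun i => (h1 i).le, ?_, fun D hD => ?_⟩
    · simp [Finset.sum_add_distrib, ← Finset.mul_sum, hv, hy1]
    · simpa [Finset.sum_add_distrib, ← Finset.mul_sum] using h2 D hD
  have key' : ∀ᶠ ε : ℝ in nhds 0, y + (-ε) • v ∈ jewel m C c := by
    have : Filter.Tendsto (fun ε : ℝ => -ε) (nhds 0) (nhds 0) := by
      simpa using (continuous_neg (G := ℝ)).tendsto 0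
    exact this.eventually key
  obtain ⟨ε, ⟨hp, hn⟩, hε⟩ :=
    (((key.and key').filter_mono nhdsWithin_le_nhds).and
      (self_mem_nhdsWithin (a := (0 : ℝ)) (s := {0}ᶜ))).exists
  have hseg : y ∈ openSegment ℝ (y + ε • v) (y + (-ε) • v) := by
    refine ⟨1 / 2, 1 / 2, by norm_num, by norm_num, by norm_num, ?_⟩
    module
  have h := hext hp hn hseg
  have h0 : ε • v = 0 := by simpa using h
  exact (smul_eq_zero.mp h0).resolve_left hε

/-- Two distinct points are separated by some tight set, since otherwise `e_p - e_q` is a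
direction along which `y` can be moved both ways. -/
lemma tight_separates {m : ℕ} {C : Set (Finset (Fin (m + 1)))}
    {c : Finset (Fin (m + 1)) → ℝ} {y : Fin (m + 1) → ℝ}
    (hy : y ∈ Set.extremePoints ℝ (jewel m C c)) (hypos : ∀ i, 0 < y i)
    {p q : Fin (m + 1)}
    (h : ∀ D ∈ C, ∑ i ∈ D, y i = c D → (p ∈ D ↔ q ∈ D)) : p = q := by
  by_contra hpq
  have hv := extreme_direction_eq_zero hy hypos (Pi.single p 1 - Pi.single q 1)
    (by simp) (fun D hD ht => by
      simp [Finset.sum_sub_distrib, h D hD ht])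
  have := congrFun hv p
  simp [hpq] at this

/-- Any two tight sets are comparable. -/
lemma tight_chain {m : ℕ} {C : Set (Finset (Fin (m + 1)))}
    (hCunion : ∀ A ∈ C, ∀ B ∈ C, A ∪ B ≠ Finset.univ → A ∪ B ∈ C)
    {c : Finset (Fin (m + 1)) → ℝ}
    (hc : ∀ A ∈ C, ∀ B ∈ C, A ∪ B ∈ C → A ⊂ A ∪ B → B ⊂ A ∪ B →
      c A + c B < c (A ∪ B))
    (hc' : ∀ A ∈ C, ∀ B ∈ C, A ∪ B = Finset.univ → ¬A ⊆ B → ¬B ⊆ A →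
      c A + c B < 1)
    {y : Fin (m + 1) → ℝ} (hy : y ∈ jewel m C c)
    {A B : Finset (Fin (m + 1))} (hA : A ∈ C) (hB : B ∈ C)
    (htA : ∑ i ∈ A, y i = c A) (htB : ∑ i ∈ B, y i = c B) : A ⊆ B ∨ B ⊆ A := by
  obtain ⟨h0, h1, hD⟩ := hy
  by_contra! hAB
  obtain ⟨hAB, hBA⟩ := hAB
  have hsum := Finset.sum_union_inter (s₁ := A) (s₂ := B) (f := y)
  have hinter : 0 ≤ ∑ i ∈ A ∩ B, y i := Finset.sum_nonneg fun i _ => h0 i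
  by_cases hU : A ∪ B = Finset.univ
  · have := hc' A hA B hB hU hAB hBA
    rw [hU, h1] at hsum
    linarith
  · have hUC := hCunion A hA B hB hU
    have := hc A hA B hB hUC
      ⟨Finset.subset_union_left, fun h => hBA (Finset.subset_union_right.trans h)⟩
      ⟨Finset.subset_union_right, fun h => hAB (Finset.subset_union_left.trans h)⟩
    have := hD _ hUC
    linarith

/-- An extreme point of the jewel with all coordinates positive lies on a complete
flag of tight truncation constraints: there is a strictly increasing chain
`A 0 ⊊ A 1 ⊊ ⋯ ⊊ A (m-1)` of members of `𝒞` with `|A j| = j + 1` and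
`∑_{i ∈ A j} y i = c (A j)` for every `j`. -/
theorem extremePoint_interior_flag (m : ℕ) (hm : 1 ≤ m)
    (C : Set (Finset (Fin (m + 1))))
    (hCne : ∀ A ∈ C, A.Nonempty) (hCprop : ∀ A ∈ C, A ≠ Finset.univ)
    (hCunion : ∀ A ∈ C, ∀ B ∈ C, A ∪ B ≠ Finset.univ → A ∪ B ∈ C)
    (c : Finset (Fin (m + 1)) → ℝ)
    (hc : ∀ A ∈ C, ∀ B ∈ C, A ∪ B ∈ C → A ⊂ A ∪ B → B ⊂ A ∪ B →
      c A + c B < c (A ∪ B))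
    (hc' : ∀ A ∈ C, ∀ B ∈ C, A ∪ B = Finset.univ → ¬A ⊆ B → ¬B ⊆ A →
      c A + c B < 1)
    (y : Fin (m + 1) → ℝ)
    (hy : y ∈ Set.extremePoints ℝ (jewel m C c))
    (hypos : ∀ i, 0 < y i) :
    ∃ A : Fin m → Finset (Fin (m + 1)),
      (∀ j, A j ∈ C ∧ (A j).card = (j : ℕ) + 1 ∧ ∑ i ∈ A j, y i = c (A j)) ∧
      (∀ j k : Fin m, j < k → A j ⊂ A k) := by
  classical
  let T : Finset (Finset (Fin (m + 1))) :=
    Finset.univ.filter fun D => D ∈ C ∧ ∑ i ∈ D, y i = c D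
  have hT : ∀ D, D ∈ T ↔ D ∈ C ∧ ∑ i ∈ D, y i = c D := fun D => by simp [T]
  have hchain : ∀ A ∈ T, ∀ B ∈ T, A ⊆ B ∨ B ⊆ A := fun A hA B hB =>
    tight_chain hCunion hc hc' hy.1 ((hT A).1 hA).1 ((hT B).1 hB).1
      ((hT A).1 hA).2 ((hT B).1 hB).2
  -- `r i` is the number of tight sets containing `i`.
  let r : Fin (m + 1) → ℕ := fun i => (T.filter fun D => i ∈ D).card
  have hrinj : Function.Injective r := by
    intro p q hpq
    refine tight_separates hy hypos fun D hDC hDt => ?_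
    -- The tight sets containing a given point form an upper set of the chain, and upper sets of a
    -- chain are nested, so equal cardinality forces equality.
    have hnest : (T.filter fun D => p ∈ D) ⊆ (T.filter fun D => q ∈ D) ∨
        (T.filter fun D => q ∈ D) ⊆ (T.filter fun D => p ∈ D) := by
      by_contra! hcon
      obtain ⟨h1, h2⟩ := hcon
      obtain ⟨A, hA, hA'⟩ := Finset.not_subset.1 h1
      obtain ⟨B, hB, hB'⟩ := Finset.not_subset.1 h2
      simp only [Finset.mem_filter, not_and] at hA hA' hB hB'
      rcases hchain A hA.1 B hB.1 with h | h
      · exact hB' hB.1 (h hA.2)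
      · exact hA' hA.1 (h hB.2)
    have heq : (T.filter fun D => p ∈ D) = (T.filter fun D => q ∈ D) := by
      rcases hnest with h | h
      · exact Finset.eq_of_subset_of_card_le h hpq.ge
      · exact (Finset.eq_of_subset_of_card_le h hpq.le).symm
    have hDT : D ∈ T := (hT D).2 ⟨hDC, hDt⟩
    simpa [hDT] using Finset.ext_iff.1 heq D
  have hTcard : m ≤ T.card := by
    have hle := Finset.card_le_card_of_injOn (s := Finset.univ) (t := Finset.range (T.card + 1)) r
      (fun i _ => by
        simpa [Nat.lt_succ_iff] using Finset.card_filter_le T fun D => i ∈ D)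
      hrinj.injOn
    simpa using hle
  have hmaps : ∀ A ∈ T, A.card ∈ Finset.Icc 1 m := by
    intro A hA
    have hAC := ((hT A).1 hA).1
    have h1 := (hCne A hAC).card_pos
    have h2 := (Finset.card_lt_iff_ne_univ A).2 (hCprop A hAC)
    simp only [Fintype.card_fin] at h2
    rw [Finset.mem_Icc]
    omega
  have hcardinj : Set.InjOn Finset.card (T : Set (Finset (Fin (m + 1)))) := by
    intro A hA B hB hAB
    rcases hchain A hA B hB with h | h
    · exact Finset.eq_of_subset_of_card_le h hAB.ge
    · exact (Finset.eq_of_subset_of_card_le h hAB.le).symm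
  have hsurj : ∀ j : Fin m, ∃ A ∈ T, A.card = (j : ℕ) + 1 := by
    intro j
    have himg : T.image Finset.card = Finset.Icc 1 m :=
      Finset.eq_of_subset_of_card_le (Finset.image_subset_iff.2 hmaps)
        (by rw [Finset.card_image_of_injOn hcardinj]; simpa using hTcard)
    have hj : (j : ℕ) + 1 ∈ T.image Finset.card := by
      rw [himg, Finset.mem_Icc]
      omega
    simpa using hj
  choose A hA hAcard using hsurj
  refine ⟨A, fun j => ⟨((hT _).1 (hA j)).1, hAcard j, ((hT _).1 (hA j)).2⟩, fun j k hjk => ?_⟩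
  have hlt : (A j).card < (A k).card := by
    rw [hAcard, hAcard]
    have : (j : ℕ) < k := hjk
    omega
  rcases hchain _ (hA j) _ (hA k) with h | h
  · exact Finset.ssubset_iff_subset_ne.2 ⟨h, fun he => by rw [he] at hlt; exact lt_irrefl _ hlt⟩
  · exact absurd (Finset.card_le_card h) hlt.not_ge
end
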